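/- Suppose F is ε-approximately k-submodular with respect to f, let B₁,…,B_k ≥ 1 be individual size budgets with B = B₁+⋯+B_k ≤ |V|, and let x⁽⁰⁾ = 𝟎, x⁽¹⁾, …, x⁽ᴮ⁾ be a greedy IS sequence for f (not for F) with these budgets. Then F(x⁽ᴮ⁾) ≥ ((1−ε)/(3(1+ε)))·F(o) for every k-state o with |supp_i(o)| ≤ B_i for all i ∈ {1,…,k}. (That is, running k-Greedy-IS on the underlying k-submodular function f yields a ((1−ε)/(3(1+ε)))-approximation for maximizing F under the individual size constraints.) -/

import Mathlib

/-!
The greedy solution is compared with `o` by exchange. Along the run one maintains a feasible state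
`o'` with `x⁽ʲ⁾ ⪯ o'`, starting from `o`. When the greedy step inserts `(e, i)`, unassign `e` in
`o'`, and, if type `i` is then still at full budget, unassign one further element `d` of type `i`
outside the greedy support; now `(e, i)` fits. Each removed pair was also available to the greedy
algorithm, so by diminishing returns each removal costs at most the greedy gain
(`le_update_zero_add`), while the insertion costs nothing by monotonicity (`exists_exchange`).
Hence `f o ≤ f o' + 2 f(x⁽ʲ⁾)` throughout. After `B` steps the greedy state uses the whole budget, so
`o' = x⁽ᴮ⁾` and `f o ≤ 3 f(x⁽ᴮ⁾)`. The two-sided bounds relating `F` and `f` give the remaining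
factor.
-/


/-- The support of a `k`-state: elements assigned a nonzero value. -/
def supp {V : Type*} [Fintype V] {k : ℕ} [DecidableEq V] (x : V → Fin (k+1)) : Finset V :=
  Finset.univ.filter (fun e => x e ≠ 0)

/-- The `i`-th support of a `k`-state: elements assigned value `i`. -/
def suppi {V : Type*} [Fintype V] {k : ℕ} [DecidableEq V] (x : V → Fin (k+1)) (i : Fin (k+1)) :
    Finset V :=
  Finset.univ.filter (fun e => x e = i)

/-- The partial order on `k`-states: `y` agrees with `x` on the support of `x`. -/
def kle {V : Type*} {k : ℕ} (x y : V → Fin (k+1)) : Prop :=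
  ∀ e, x e ≠ 0 → y e = x e

/-- `kadd x e i` is the `k`-state agreeing with `x` except that `e` is assigned `i`. -/
def kadd {V : Type*} [DecidableEq V] {k : ℕ} (x : V → Fin (k+1)) (e : V) (i : Fin (k+1)) :
    V → Fin (k+1) :=
  Function.update x e i

/-- The marginal gain `Δ_{e,i} g (x) = g(x + (e,i)) - g(x)`. -/
def marg {V : Type*} [DecidableEq V] {k : ℕ} (g : (V → Fin (k+1)) → ℝ) (e : V)
    (i : Fin (k+1)) (x : V → Fin (k+1)) : ℝ :=
  g (kadd x e i) - g x

/-- `f` is monotone and satisfies the diminishing returns property (monotone k-submodular). -/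
def KSubmodular {V : Type*} [Fintype V] [DecidableEq V] {k : ℕ}
    (f : (V → Fin (k+1)) → ℝ) : Prop :=
  (∀ x y : V → Fin (k+1), kle x y → f x ≤ f y) ∧
  (∀ x y : V → Fin (k+1), kle x y → ∀ e, e ∉ supp y → ∀ i : Fin (k+1), i ≠ 0 →
    marg f e i x ≥ marg f e i y)

/-- `F` is ε-approximately k-submodular (ε-AS) with respect to `f`. -/
def EpsAS {V : Type*} [Fintype V] [DecidableEq V] {k : ℕ} (ε : ℝ)
    (F f : (V → Fin (k+1)) → ℝ) : Prop :=
  (∀ x, 0 ≤ f x) ∧ KSubmodular f ∧ f (fun _ => (0 : Fin (k+1))) = 0 ∧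
  (∀ x : V → Fin (k+1), (1 - ε) * f x ≤ F x ∧ F x ≤ (1 + ε) * f x)

/-- `F` is ε-approximately diminishing returns (ε-ADR) with respect to `f`. -/
def EpsADR {V : Type*} [Fintype V] [DecidableEq V] {k : ℕ} (ε : ℝ)
    (F f : (V → Fin (k+1)) → ℝ) : Prop :=
  (∀ x, 0 ≤ f x) ∧ KSubmodular f ∧ f (fun _ => (0 : Fin (k+1))) = 0 ∧
  (∀ x : V → Fin (k+1), ∀ e, e ∉ supp x → ∀ i : Fin (k+1), i ≠ 0 →
    (1 - ε) * marg f e i x ≤ marg F e i x ∧ marg F e i x ≤ (1 + ε) * marg f e i x)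

/-- A greedy TS sequence of length `B` for `G` (run of k-Greedy-TS on `G` with budget `B`). -/
def GreedyTS {V : Type*} [Fintype V] [DecidableEq V] {k : ℕ}
    (G : (V → Fin (k+1)) → ℝ) (B : ℕ) (x : ℕ → V → Fin (k+1))
    (es : ℕ → V) (is : ℕ → Fin (k+1)) : Prop :=
  x 0 = (fun _ => (0 : Fin (k+1))) ∧
  ∀ j, 1 ≤ j → j ≤ B →
    es j ∉ supp (x (j-1)) ∧ is j ≠ 0 ∧
    x j = kadd (x (j-1)) (es j) (is j) ∧
    (∀ e, e ∉ supp (x (j-1)) → ∀ i : Fin (k+1), i ≠ 0 →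
      marg G (es j) (is j) (x (j-1)) ≥ marg G e i (x (j-1)))

/-- A greedy IS sequence for `G` with individual budgets `Bv` (run of k-Greedy-IS on `G`). -/
def GreedyIS {V : Type*} [Fintype V] [DecidableEq V] {k : ℕ}
    (G : (V → Fin (k+1)) → ℝ) (Bv : Fin (k+1) → ℕ) (B : ℕ) (x : ℕ → V → Fin (k+1))
    (es : ℕ → V) (is : ℕ → Fin (k+1)) : Prop :=
  x 0 = (fun _ => (0 : Fin (k+1))) ∧
  ∀ j, 1 ≤ j → j ≤ B →
    es j ∉ supp (x (j-1)) ∧ is j ≠ 0 ∧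
    (suppi (x (j-1)) (is j)).card < Bv (is j) ∧
    x j = kadd (x (j-1)) (es j) (is j) ∧
    (∀ e, e ∉ supp (x (j-1)) → ∀ i : Fin (k+1), i ≠ 0 →
      (suppi (x (j-1)) i).card < Bv i →
      marg G (es j) (is j) (x (j-1)) ≥ marg G e i (x (j-1)))

/-- Feasibility for the individual size budgets: at most `Bv i` elements of each type `i ≠ 0`. -/
def Feasible {V : Type*} [Fintype V] [DecidableEq V] {k : ℕ} (Bv : Fin (k+1) → ℕ)
    (o : V → Fin (k+1)) : Prop :=
  ∀ i : Fin (k+1), i ≠ 0 → (suppi o i).card ≤ Bv i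

section
variable {V : Type*} [DecidableEq V] {k : ℕ}

lemma kle_update_zero {x o : V → Fin (k+1)} {d : V} (h : kle x o) (hd : x d = 0) :
    kle x (Function.update o d 0) := by
  intro e he
  have : e ≠ d := by rintro rfl; exact he hd
  rw [Function.update_of_ne this]
  exact h e he

lemma kle_kadd {x o : V → Fin (k+1)} (h : kle x o) (e : V) (i : Fin (k+1)) :
    kle (kadd x e i) (kadd o e i) := by
  intro v hv
  by_cases hve : v = e
  · subst hve; simp [kadd]
  · simp only [kadd, Function.update_of_ne hve] at hv ⊢
    exact h v hv

lemma kle_self_kadd {x : V → Fin (k+1)} {e : V} (he : x e = 0) (i : Fin (k+1)) :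
    kle x (kadd x e i) := by
  intro v hv
  have : v ≠ e := by rintro rfl; exact hv he
  simp [kadd, this]

variable [Fintype V]

lemma mem_supp {x : V → Fin (k+1)} {e : V} : e ∈ supp x ↔ x e ≠ 0 := by
  simp [supp]

lemma mem_suppi {x : V → Fin (k+1)} {i : Fin (k+1)} {e : V} : e ∈ suppi x i ↔ x e = i := by
  simp [suppi]

lemma Feasible.update_zero {Bv : Fin (k+1) → ℕ} {o : V → Fin (k+1)} (h : Feasible Bv o) (d : V) :
    Feasible Bv (Function.update o d 0) := by
  intro i hi
  refine (Finset.card_le_card ?_).trans (h i hi)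
  intro e he
  rw [mem_suppi] at he ⊢
  by_cases hed : e = d
  · subst hed
    simp only [Function.update_self] at he
    exact absurd he.symm hi
  · rwa [Function.update_of_ne hed] at he

lemma suppi_subset {x o : V → Fin (k+1)} (h : kle x o) {i : Fin (k+1)} (hi : i ≠ 0) :
    suppi x i ⊆ suppi o i := by
  intro e he
  rw [mem_suppi] at he ⊢
  rw [h e (by rw [he]; exact hi), he]

/-- A bound `g` on all marginal gains available at `x` within the budgets also bounds the loss from
unassigning in a feasible `o ⪰ x` an element outside the support of `x`: its type still has room
at `x`, so diminishing returns applies. -/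
lemma le_update_zero_add {f : (V → Fin (k+1)) → ℝ} (hf : KSubmodular f) {Bv : Fin (k+1) → ℕ}
    {x o : V → Fin (k+1)} {g : ℝ} (hg0 : 0 ≤ g)
    (hg : ∀ e, e ∉ supp x → ∀ i : Fin (k+1), i ≠ 0 → (suppi x i).card < Bv i → marg f e i x ≤ g)
    (hxo : kle x o) (ho : Feasible Bv o) {d : V} (hd : x d = 0) :
    f o ≤ f (Function.update o d 0) + g := by
  by_cases h0 : o d = 0
  · have : Function.update o d 0 = o := by rw [← h0, Function.update_eq_self]
    rw [this]; linarith
  have hlt : (suppi x (o d)).card < Bv (o d) := by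
    refine lt_of_lt_of_le (Finset.card_lt_card ?_) (ho _ h0)
    refine (Finset.ssubset_iff_of_subset (suppi_subset hxo h0)).2 ⟨d, ?_, ?_⟩
    · simp [suppi]
    · simpa [suppi, hd] using Ne.symm h0
  have h1 := hg d (by simp [supp, hd]) (o d) h0 hlt
  have h2 := hf.2 x (Function.update o d 0) (kle_update_zero hxo hd) d (by simp [supp]) (o d) h0
  have h3 : kadd (Function.update o d 0) d (o d) = o := by
    simp [kadd]
  have h4 : marg f d (o d) (Function.update o d 0) = f o - f (Function.update o d 0) := by
    rw [marg, h3]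
  linarith

lemma Feasible.kadd {Bv : Fin (k+1) → ℕ} {o : V → Fin (k+1)} (h : Feasible Bv o) {e : V}
    (he : o e = 0) {i : Fin (k+1)} (hi : (suppi o i).card < Bv i) :
    Feasible Bv (kadd o e i) := by
  intro j hj
  by_cases hji : j = i
  · subst hji
    have hsub : suppi (_root_.kadd o e j) j ⊆ insert e (suppi o j) := by
      intro v hv
      by_cases hve : v = e
      · simp [hve]
      · simpa [mem_suppi, _root_.kadd, hve] using hv
    exact (Finset.card_le_card hsub).trans ((Finset.card_insert_le _ _).trans hi)
  · refine (Finset.card_le_card ?_).trans (h j hj)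
    intro v hv
    by_cases hve : v = e
    · subst hve
      exact absurd (by simpa [mem_suppi, _root_.kadd] using hv) (Ne.symm hji)
    · simpa [mem_suppi, _root_.kadd, hve] using hv

/-- The exchange step: following the best available move `(e, i)` from `x`, a feasible state above
`x` can be turned into a feasible state above `x + (e, i)` at a cost of at most twice the gain. -/
lemma exists_exchange {f : (V → Fin (k+1)) → ℝ} (hf : KSubmodular f) {Bv : Fin (k+1) → ℕ}
    {x o : V → Fin (k+1)} {e : V} {i : Fin (k+1)} (he : x e = 0) (hi : i ≠ 0)
    (hlt : (suppi x i).card < Bv i)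
    (hg : ∀ e', e' ∉ supp x → ∀ j : Fin (k+1), j ≠ 0 → (suppi x j).card < Bv j →
      marg f e' j x ≤ marg f e i x)
    (hxo : kle x o) (ho : Feasible Bv o) :
    ∃ o' : V → Fin (k+1), kle (kadd x e i) o' ∧ Feasible Bv o' ∧
      f o ≤ f o' + 2 * marg f e i x := by
  have hg0 : 0 ≤ marg f e i x := sub_nonneg.2 (hf.1 _ _ (kle_self_kadd he i))
  set o₁ := Function.update o e 0 with ho₁
  have hx₁ : kle x o₁ := kle_update_zero hxo he
  have hF₁ : Feasible Bv o₁ := ho.update_zero e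
  have hb₁ : f o ≤ f o₁ + marg f e i x := le_update_zero_add hf hg0 hg hxo ho he
  have he₁ : o₁ e = 0 := by simp [ho₁]
  by_cases hroom : (suppi o₁ i).card < Bv i
  · refine ⟨kadd o₁ e i, kle_kadd hx₁ e i, hF₁.kadd he₁ hroom, ?_⟩
    have := hf.1 _ _ (kle_self_kadd he₁ i)
    linarith
  -- Type `i` is full in `o₁` but not in `x`, so some element of type `i` lies outside `supp x`.
  obtain ⟨d, hd, hdx⟩ := Finset.exists_mem_notMem_of_card_lt_card
    (lt_of_lt_of_le hlt (not_lt.1 hroom))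
  have hd : o₁ d = i := by simpa [suppi] using hd
  have hdx : x d = 0 := by
    by_contra h
    exact hdx (by simp [suppi, ← hx₁ d h, hd])
  have hed : e ≠ d := by rintro rfl; exact hi (hd.symm.trans he₁)
  set o₂ := Function.update o₁ d 0 with ho₂
  have hb₂ : f o₁ ≤ f o₂ + marg f e i x := le_update_zero_add hf hg0 hg hx₁ hF₁ hdx
  have he₂ : o₂ e = 0 := by simp [ho₂, hed, he₁]
  have hroom₂ : (suppi o₂ i).card < Bv i := by
    refine lt_of_lt_of_le (Finset.card_lt_card ?_) (hF₁ i hi)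
    refine (Finset.ssubset_iff_of_subset ?_).2 ⟨d, by simp [suppi, hd], ?_⟩
    · refine suppi_subset (fun v hv => ?_) hi
      by_cases hvd : v = d
      · simp [ho₂, hvd] at hv
      · simp [ho₂, hvd]
    · simpa [suppi, ho₂] using hi.symm
  refine ⟨kadd o₂ e i, kle_kadd (kle_update_zero hx₁ hdx) e i,
    (hF₁.update_zero d).kadd he₂ hroom₂, ?_⟩
  have := hf.1 _ _ (kle_self_kadd he₂ i)
  linarith

lemma card_supp_kadd {x : V → Fin (k+1)} {e : V} (he : e ∉ supp x) {i : Fin (k+1)} (hi : i ≠ 0) :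
    (supp (kadd x e i)).card = (supp x).card + 1 := by
  rw [← Finset.card_insert_of_notMem he]
  congr 1
  ext v
  by_cases hve : v = e
  · subst hve; simp [mem_supp, kadd, hi]
  · simp [mem_supp, kadd, hve]

lemma Feasible.card_supp_le {Bv : Fin (k+1) → ℕ} {o : V → Fin (k+1)} (h : Feasible Bv o) :
    (supp o).card ≤ ∑ i ∈ Finset.univ.erase (0 : Fin (k+1)), Bv i := by
  rw [Finset.card_eq_sum_card_fiberwise (f := o) (t := Finset.univ.erase (0 : Fin (k+1)))
    (fun v hv => by simpa [supp] using hv)]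
  refine Finset.sum_le_sum fun i hi => ?_
  refine (Finset.card_le_card ?_).trans (h i (Finset.ne_of_mem_erase hi))
  exact Finset.filter_subset_filter _ (Finset.subset_univ _)

lemma eq_of_kle_of_card_le {x o : V → Fin (k+1)} (h : kle x o)
    (hc : (supp o).card ≤ (supp x).card) : o = x := by
  have hsub : supp x ⊆ supp o := by
    intro v hv
    rw [mem_supp] at hv ⊢
    rwa [h v hv]
  have heq := Finset.eq_of_subset_of_card_le hsub hc
  funext v
  by_cases hv : x v = 0
  · have : v ∉ supp o := by rw [← heq]; simp [supp, hv]
    rw [hv]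
    simpa [supp] using this
  · exact h v hv

/-- Greedy with individual budgets is a `1/3`-approximation for the monotone `k`-submodular
function it is run on. -/
lemma GreedyIS.le_three_mul {f : (V → Fin (k+1)) → ℝ} (hf : KSubmodular f)
    (hf0 : f (fun _ => (0 : Fin (k+1))) = 0) {Bv : Fin (k+1) → ℕ} {B : ℕ}
    (hB : B = ∑ i ∈ Finset.univ.erase (0 : Fin (k+1)), Bv i)
    {x : ℕ → V → Fin (k+1)} {es : ℕ → V} {is : ℕ → Fin (k+1)} (hgr : GreedyIS f Bv B x es is)
    {o : V → Fin (k+1)} (ho : Feasible Bv o) : f o ≤ 3 * f (x B) := by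
  have key : ∀ j, j ≤ B → (supp (x j)).card = j ∧
      ∃ o' : V → Fin (k+1), kle (x j) o' ∧ Feasible Bv o' ∧ f o ≤ f o' + 2 * f (x j) := by
    intro j
    induction j with
    | zero =>
      intro _
      rw [hgr.1]
      exact ⟨by simp [supp], o, fun v hv => absurd rfl hv, ho, by rw [hf0]; linarith⟩
    | succ j ih =>
      intro hj
      obtain ⟨hc, o', hxo, ho', hb⟩ := ih (by omega)
      obtain ⟨he, hi, hlt, hx, hg⟩ := hgr.2 (j + 1) (by omega) hj
      rw [Nat.add_sub_cancel] at he hlt hx hg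
      rw [hx]
      refine ⟨by rw [card_supp_kadd he hi, hc], ?_⟩
      obtain ⟨o'', h1, h2, h3⟩ :=
        exists_exchange hf (by simpa [supp] using he) hi hlt hg hxo ho'
      refine ⟨o'', h1, h2, ?_⟩
      rw [marg] at h3
      linarith
  obtain ⟨hc, o', hxo, ho', hb⟩ := key B le_rfl
  have : o' = x B := eq_of_kle_of_card_le hxo (by rw [hc, hB]; exact ho'.card_supp_le)
  rw [this] at hb
  linarith

end

/-- running k-Greedy-IS on `f` gives a (1-ε)/(3(1+ε)) approximation for `F`. -/
theorem stmt17 {V : Type*} [Fintype V] [DecidableEq V] {k : ℕ} (hk : 1 ≤ k)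
    (ε : ℝ) (hε0 : 0 < ε) (hε1 : ε < 1)
    (F f : (V → Fin (k+1)) → ℝ)
    (hAS : EpsAS ε F f)
    (Bv : Fin (k+1) → ℕ) (hBv : ∀ i : Fin (k+1), i ≠ 0 → 1 ≤ Bv i)
    (B : ℕ) (hBdef : B = ∑ i ∈ Finset.univ.erase (0 : Fin (k+1)), Bv i)
    (hB : B ≤ Fintype.card V)
    (x : ℕ → V → Fin (k+1)) (es : ℕ → V) (is : ℕ → Fin (k+1))
    (hgr : GreedyIS f Bv B x es is) :
    ∀ o : V → Fin (k+1), (∀ i : Fin (k+1), i ≠ 0 → (suppi o i).card ≤ Bv i) →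
      F (x B) ≥ ((1 - ε) / (3 * (1 + ε))) * F o := by
  intro o ho
  obtain ⟨-, hf, hf0, hF⟩ := hAS
  have h3 : f o ≤ 3 * f (x B) := hgr.le_three_mul hf hf0 hBdef ho
  have hpos : 0 < 1 + ε := by linarith
  have hc : 0 ≤ (1 - ε) / (3 * (1 + ε)) := div_nonneg (by linarith) (by linarith)
  calc (1 - ε) / (3 * (1 + ε)) * F o
      ≤ (1 - ε) / (3 * (1 + ε)) * ((1 + ε) * (3 * f (x B))) :=
        mul_le_mul_of_nonneg_left
          ((hF o).2.trans (mul_le_mul_of_nonneg_left h3 hpos.le)) hc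
    _ = (1 - ε) * f (x B) := by field_simp
    _ ≤ F (x B) := (hF (x B)).1
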